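/- arXiv:0801.4259 — 3 statements merged into one kernel-verified Lean document; each statement's English description precedes it below -/
import Mathlib

section
/- Let H be a complex Hilbert space, M a von Neumann algebra acting on H, and ξ₀ a cyclic and separating vector for M. An orthogonal projection p on H is a central projection of M (i.e. p ∈ M and p commutes with every element of M) if and only if p(P♯) ⊆ P♯ and (1 − p)(P♯) ⊆ P♯. -/
open scoped InnerProductSpace
open Filter

variable {H : Type*} [NormedAddCommGroup H] [InnerProductSpace ℂ H] [CompleteSpace H]

/-- The positive cone `P♯`: the closure in `H` of `{a ξ₀ : a ∈ M, a positive}`. -/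
def sharpCone (M : VonNeumannAlgebra H) (ξ₀ : H) : Set H :=
  closure {ζ : H | ∃ a : H →L[ℂ] H, a ∈ M ∧ a.IsPositive ∧ a ξ₀ = ζ}

/-- `ξ₀` is a cyclic vector for `M`: the linear span of `{x ξ₀ : x ∈ M}` is dense in `H`. -/
def IsCyclicVector (M : VonNeumannAlgebra H) (ξ₀ : H) : Prop :=
  Dense ((Submodule.span ℂ ((fun x : H →L[ℂ] H => x ξ₀) '' (M : Set (H →L[ℂ] H)))) : Set H)

/-- `ξ₀` is a separating vector for `M`: `x ∈ M` and `x ξ₀ = 0` imply `x = 0`. -/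
def IsSeparatingVector (M : VonNeumannAlgebra H) (ξ₀ : H) : Prop :=
  ∀ x : H →L[ℂ] H, x ∈ M → x ξ₀ = 0 → x = 0

theorem ContinuousLinearMap.IsPositive.apply_eq_zero_of_inner_eq_zero {c : H →L[ℂ] H}
    (hc : c.IsPositive) {w : H} (hw : ⟪c w, w⟫_ℂ = 0) : c w = 0 := by
  obtain ⟨s, rfl⟩ := CStarAlgebra.nonneg_iff_eq_star_mul_self.mp
    ((ContinuousLinearMap.nonneg_iff_isPositive c).mpr hc)
  rw [mul_apply_eq_comp, ContinuousLinearMap.star_eq_adjoint,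
    ContinuousLinearMap.adjoint_inner_left, inner_self_eq_zero] at hw
  rw [mul_apply_eq_comp, hw, map_zero]

open scoped ComplexOrder in
theorem ContinuousLinearMap.IsPositive.mul_eq_zero_of_le {c b q : H →L[ℂ] H}
    (hc : c.IsPositive) (hbc : (b - c).IsPositive) (hbq : b * q = 0) : c * q = 0 := by
  ext v
  have hb : b (q v) = 0 := congr($hbq v)
  refine hc.apply_eq_zero_of_inner_eq_zero (w := q v) (le_antisymm ?_ (hc.inner_nonneg_left _))
  simpa [hb] using hbc.inner_nonneg_left (q v)

theorem ContinuousLinearMap.IsPositive.eq_zero_of_neg {c : H →L[ℂ] H}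
    (hc : c.IsPositive) (hnc : (-c).IsPositive) : c = 0 := by
  simpa using hc.mul_eq_zero_of_le (b := 0) (q := 1) (by simpa using hnc) (by simp)

/-- For `0 ≤ b ≤ 1` the product `b (1 - b)` is positive. -/
theorem ContinuousLinearMap.IsPositive.mul_one_sub {b : H →L[ℂ] H}
    (hb : b.IsPositive) (hb' : (1 - b).IsPositive) : (b * (1 - b)).IsPositive := by
  have h₁ := hb'.conj_adjoint b
  have h₂ := hb.conj_adjoint (1 - b)
  rw [hb.isSelfAdjoint.adjoint_eq] at h₁
  rw [hb'.isSelfAdjoint.adjoint_eq] at h₂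
  convert h₁.add h₂ using 1
  change b * (1 - b) = b * ((1 - b) * b) + (1 - b) * (b * (1 - b))
  noncomm_ring

theorem IsSelfAdjoint.isPositive_mul_self {b : H →L[ℂ] H} (hb : IsSelfAdjoint b) :
    (b * b).IsPositive := by
  have h := ContinuousLinearMap.isPositive_self_comp_adjoint b
  rwa [hb.adjoint_eq] at h

theorem IsSelfAdjoint.isPositive_norm_smul_one_sub {a : H →L[ℂ] H} (ha : IsSelfAdjoint a) :
    ((‖a‖ : ℂ) • (1 : H →L[ℂ] H) - a).IsPositive := by
  have h := ha.le_algebraMap_norm_self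
  rw [ContinuousLinearMap.le_def, Algebra.algebraMap_eq_smul_one] at h
  simpa using h

namespace VonNeumannAlgebra

theorem smul_mem (M : VonNeumannAlgebra H) (r : ℂ) {a : H →L[ℂ] H} (ha : a ∈ M) : r • a ∈ M :=
  M.toStarSubalgebra.smul_mem ha r

/-- A von Neumann algebra is linearly spanned by its positive elements. -/
theorem mem_of_isPositive_mem {M : VonNeumannAlgebra H} (S : Submodule ℂ (H →L[ℂ] H))
    (hS : ∀ a ∈ M, a.IsPositive → a ∈ S) {a : H →L[ℂ] H} (ha : a ∈ M) : a ∈ S := by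
  have hsa : ∀ c ∈ M, IsSelfAdjoint c → c ∈ S := by
    intro c hc hcs
    have h₁ : (‖c‖ : ℂ) • (1 : H →L[ℂ] H) ∈ M := M.smul_mem _ (one_mem M)
    have h₂ : ((‖c‖ : ℂ) • (1 : H →L[ℂ] H)).IsPositive :=
      ContinuousLinearMap.isPositive_one.smul_of_nonneg (by simp)
    have h := S.sub_mem (hS _ h₁ h₂) (hS _ (sub_mem h₁ hc) hcs.isPositive_norm_smul_one_sub)
    simpa using h
  have hreal : ∀ (r : ℝ) {c : H →L[ℂ] H}, c ∈ M → r • c ∈ M := fun r c hc => by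
    rw [← Complex.coe_smul]
    exact M.smul_mem _ hc
  have hre : (realPart a : H →L[ℂ] H) ∈ M := by
    rw [realPart_apply_coe]
    exact hreal _ (add_mem ha (star_mem ha))
  have him : (imaginaryPart a : H →L[ℂ] H) ∈ M := by
    rw [imaginaryPart_apply_coe]
    exact M.smul_mem _ (hreal _ (sub_mem ha (star_mem ha)))
  rw [← realPart_add_I_smul_imaginaryPart a]
  exact S.add_mem (hsa _ hre (realPart a).2) (S.smul_mem _ (hsa _ him (imaginaryPart a).2))

end VonNeumannAlgebra

/-- Evaluation at `ξ` as a linear map on the von Neumann algebra `N`. -/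
def VonNeumannAlgebra.evalAt (N : VonNeumannAlgebra H) (ξ : H) : N.toStarSubalgebra →ₗ[ℂ] H where
  toFun x := (x : H →L[ℂ] H) ξ
  map_add' _ _ := rfl
  map_smul' _ _ := rfl

theorem IsCyclicVector.denseRange_evalAt {N : VonNeumannAlgebra H} {ξ : H}
    (h : IsCyclicVector N ξ) : DenseRange (N.evalAt ξ) := by
  refine h.mono ?_
  rw [← LinearMap.coe_range]
  refine Submodule.span_le.mpr ?_
  rintro _ ⟨x, hx, rfl⟩
  exact ⟨⟨x, hx⟩, rfl⟩

/-- A separating vector for `M` is cyclic for the commutant. -/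
theorem IsSeparatingVector.denseRange_evalAt_commutant {M : VonNeumannAlgebra H} {ξ₀ : H}
    (hsep : IsSeparatingVector M ξ₀) : DenseRange (M.commutant.evalAt ξ₀) := by
  set K := (M.commutant.evalAt ξ₀).range.topologicalClosure
  have hKc : IsClosed (K : Set H) := Submodule.isClosed_topologicalClosure _
  have : CompleteSpace K := hKc.completeSpace_coe
  have hq : K.starProjection ∈ M := by
    rw [VonNeumannAlgebra.IsStarProjection.mem_iff isStarProjection_starProjection]
    intro y hy
    rw [Submodule.range_starProjection, Module.End.mem_invtSubmodule]
    intro v hv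
    refine map_mem_closure (f := y) y.continuous hv ?_
    rintro _ ⟨x, rfl⟩
    exact ⟨⟨y * x, mul_mem hy x.2⟩, rfl⟩
  have hξ : ξ₀ ∈ K := Submodule.le_topologicalClosure _ ⟨⟨1, one_mem M.commutant⟩, rfl⟩
  have h1 : 1 - K.starProjection = 0 := by
    refine hsep _ (sub_mem (one_mem M) hq) ?_
    simp [Submodule.starProjection_eq_self_iff.mpr hξ]
  intro v
  have hv : v ∈ K := by
    rw [← Submodule.starProjection_eq_self_iff, ← sub_eq_zero.mp h1]
    rfl
  exact hv

section sharpCone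

open scoped ComplexOrder

variable {M : VonNeumannAlgebra H} {ξ₀ : H}

theorem apply_mem_sharpCone {a : H →L[ℂ] H} (ha : a ∈ M) (hpos : a.IsPositive) :
    a ξ₀ ∈ sharpCone M ξ₀ :=
  subset_closure ⟨a, ha, hpos, rfl⟩

theorem add_mem_sharpCone {ζ η : H} (hζ : ζ ∈ sharpCone M ξ₀) (hη : η ∈ sharpCone M ξ₀) :
    ζ + η ∈ sharpCone M ξ₀ := by
  refine map_mem_closure₂ continuous_add hζ hη ?_
  rintro _ ⟨a, ha, ha', rfl⟩ _ ⟨b, hb, hb', rfl⟩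
  exact ⟨a + b, add_mem ha hb, ha'.add hb', rfl⟩

theorem VonNeumannAlgebra.apply_commutant_comm {a x : H →L[ℂ] H} (ha : a ∈ M)
    (hx : x ∈ M.commutant) (v : H) : a (x v) = x (a v) :=
  congr($(VonNeumannAlgebra.mem_commutant_iff.mp hx a ha) v)

theorem inner_commutant_comm_of_mem_sharpCone {ζ : H} (hζ : ζ ∈ sharpCone M ξ₀)
    {x y : H →L[ℂ] H} (hx : x ∈ M.commutant) (hy : y ∈ M.commutant) :
    ⟪x ξ₀, y ζ⟫_ℂ = ⟪x ζ, y ξ₀⟫_ℂ := by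
  have hcl : IsClosed {ζ : H | ⟪x ξ₀, y ζ⟫_ℂ = ⟪x ζ, y ξ₀⟫_ℂ} :=
    isClosed_eq (by fun_prop) (by fun_prop)
  refine closure_minimal ?_ hcl hζ
  rintro _ ⟨a, ha, hpos, rfl⟩
  change ⟪x ξ₀, y (a ξ₀)⟫_ℂ = ⟪x (a ξ₀), y ξ₀⟫_ℂ
  rw [← VonNeumannAlgebra.apply_commutant_comm ha hx,
    ← VonNeumannAlgebra.apply_commutant_comm ha hy, hpos.inner_left_eq_inner_right]

theorem inner_commutant_nonneg_of_mem_sharpCone {ζ : H} (hζ : ζ ∈ sharpCone M ξ₀)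
    {x : H →L[ℂ] H} (hx : x ∈ M.commutant) : 0 ≤ ⟪x ξ₀, x ζ⟫_ℂ := by
  have hcl : IsClosed {ζ : H | 0 ≤ ⟪x ξ₀, x ζ⟫_ℂ} :=
    isClosed_le (by fun_prop) (by fun_prop)
  refine closure_minimal ?_ hcl hζ
  rintro _ ⟨a, ha, hpos, rfl⟩
  change 0 ≤ ⟪x ξ₀, x (a ξ₀)⟫_ℂ
  rw [← VonNeumannAlgebra.apply_commutant_comm ha hx]
  exact hpos.inner_nonneg_right _

/-- An element of `M` that maps `ξ₀` into `P♯` is positive. -/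
theorem IsSeparatingVector.isPositive_of_apply_mem_sharpCone (hsep : IsSeparatingVector M ξ₀)
    {c : H →L[ℂ] H} (hc : c ∈ M) (hcξ : c ξ₀ ∈ sharpCone M ξ₀) : c.IsPositive := by
  have hnonneg : ∀ v, 0 ≤ ⟪v, c v⟫_ℂ := by
    refine fun v => hsep.denseRange_evalAt_commutant.induction_on v
      (isClosed_le (by fun_prop) (by fun_prop)) fun x => ?_
    change 0 ≤ ⟪(x : H →L[ℂ] H) ξ₀, c ((x : H →L[ℂ] H) ξ₀)⟫_ℂ
    rw [VonNeumannAlgebra.apply_commutant_comm hc x.2]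
    exact inner_commutant_nonneg_of_mem_sharpCone hcξ x.2
  rw [ContinuousLinearMap.isPositive_iff_complex]
  intro v
  have hv : 0 ≤ ⟪c v, v⟫_ℂ := by
    rw [← inner_conj_symm]
    exact star_nonneg_iff.mpr (hnonneg v)
  rw [Complex.le_def] at hv
  exact ⟨Complex.ext rfl hv.2, hv.1⟩

/-- If `η` and `k ξ₀ - η` lie in `P♯`, then `x ξ₀ ↦ x η` is bounded by `k` on the commutant. -/
theorem IsSeparatingVector.norm_commutant_apply_le (hsep : IsSeparatingVector M ξ₀) {η : H}
    {k : ℝ} (hk : 0 < k) (hη : η ∈ sharpCone M ξ₀)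
    (hkη : (k : ℂ) • ξ₀ - η ∈ sharpCone M ξ₀) {x : H →L[ℂ] H} (hx : x ∈ M.commutant) :
    ‖x η‖ ≤ k * ‖x ξ₀‖ := by
  have hbound : ∀ v : H, 4 * (⟪v, x η⟫_ℂ).re ≤ k * (‖x ξ₀‖ + ‖v‖) ^ 2 := by
    refine fun v => hsep.denseRange_evalAt_commutant.induction_on v
      (isClosed_le (by fun_prop) (by fun_prop)) fun y => ?_
    obtain ⟨y, hy⟩ := y
    change 4 * (⟪y ξ₀, x η⟫_ℂ).re ≤ k * (‖x ξ₀‖ + ‖y ξ₀‖) ^ 2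
    have hminus := (Complex.le_def.mp
      (inner_commutant_nonneg_of_mem_sharpCone hη (sub_mem hx hy))).1
    have hplus := (Complex.le_def.mp
      (inner_commutant_nonneg_of_mem_sharpCone hkη (add_mem hx hy))).1
    have hsymm : (⟪x ξ₀, y η⟫_ℂ).re = (⟪y ξ₀, x η⟫_ℂ).re := by
      rw [inner_commutant_comm_of_mem_sharpCone hη hx hy, ← inner_conj_symm, Complex.conj_re]
    rw [map_sub, map_smul, inner_sub_right, inner_smul_right, inner_self_eq_norm_sq_to_K] at hplus
    have hnorm : ‖(x + y) ξ₀‖ ^ 2 ≤ (‖x ξ₀‖ + ‖y ξ₀‖) ^ 2 := by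
      gcongr
      exact norm_add_le _ _
    have hre : ((k : ℂ) * ((‖(x + y) ξ₀‖ : ℝ) : ℂ) ^ 2).re = k * ‖(x + y) ξ₀‖ ^ 2 := by
      norm_cast
    have hplus' : (⟪(x + y) ξ₀, (x + y) η⟫_ℂ).re ≤ k * ‖(x + y) ξ₀‖ ^ 2 := by
      rw [← hre]
      rw [Complex.sub_re, Complex.zero_re] at hplus
      exact sub_nonneg.mp hplus
    simp only [sub_apply, add_apply, inner_sub_left,
      inner_sub_right, inner_add_left, inner_add_right, Complex.sub_re, Complex.add_re,
      Complex.zero_re] at hminus hplus'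
    simp only [add_apply] at hnorm hplus'
    nlinarith [mul_le_mul_of_nonneg_left hnorm hk.le]
  have h := hbound (((k⁻¹ : ℝ) : ℂ) • x η)
  rw [inner_smul_left, Complex.conj_ofReal, Complex.re_ofReal_mul, norm_smul,
    inner_self_eq_norm_sq_to_K, Complex.norm_real, Real.norm_of_nonneg (inv_nonneg.mpr hk.le)] at h
  have hre : (((‖x η‖ : ℝ) : ℂ) ^ 2).re = ‖x η‖ ^ 2 := by norm_cast
  have h' : 4 * (k⁻¹ * ‖x η‖ ^ 2) ≤ k * (‖x ξ₀‖ + k⁻¹ * ‖x η‖) ^ 2 := by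
    rw [← hre]
    exact h
  have hsq : (2 * ‖x η‖) ^ 2 ≤ (k * ‖x ξ₀‖ + ‖x η‖) ^ 2 := by
    have := mul_le_mul_of_nonneg_left h' hk.le
    field_simp at this
    nlinarith
  have := (sq_le_sq₀ (by positivity) (by positivity)).mp hsq
  linarith

/-- Radon–Nikodym: a vector between `0` and `k ξ₀` in the order of `P♯` is `b ξ₀` with `b ∈ M`. -/
theorem IsSeparatingVector.exists_apply_eq (hsep : IsSeparatingVector M ξ₀) {η : H}
    {k : ℝ} (hk : 0 < k) (hη : η ∈ sharpCone M ξ₀)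
    (hkη : (k : ℂ) • ξ₀ - η ∈ sharpCone M ξ₀) : ∃ b ∈ M, b ξ₀ = η := by
  have hd := hsep.denseRange_evalAt_commutant
  set T : H →L[ℂ] H := (M.commutant.evalAt η).extendOfNorm (M.commutant.evalAt ξ₀)
  have hT : ∀ x ∈ M.commutant, T (x ξ₀) = x η := fun x hx =>
    LinearMap.extendOfNorm_eq hd
      ⟨k, fun y => hsep.norm_commutant_apply_le hk hη hkη y.2⟩ ⟨x, hx⟩
  refine ⟨T, ?_, hT 1 (one_mem _)⟩
  rw [← M.commutant_commutant, VonNeumannAlgebra.mem_commutant_iff]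
  intro y hy
  ext v
  refine hd.induction_on v (isClosed_eq (by fun_prop) (by fun_prop)) fun x => ?_
  change y (T ((x : H →L[ℂ] H) ξ₀)) = T ((y * x : H →L[ℂ] H) ξ₀)
  rw [hT _ x.2, hT _ (mul_mem hy x.2)]
  rfl

/-- A bounded operator `p` such that `p` and `1 - p` preserve `P♯` maps `M₊ ξ₀` into `M ξ₀`. -/
theorem IsSeparatingVector.exists_apply_eq_map_apply (hsep : IsSeparatingVector M ξ₀)
    {p : H →L[ℂ] H} (hp : ∀ ζ ∈ sharpCone M ξ₀, p ζ ∈ sharpCone M ξ₀)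
    (hp' : ∀ ζ ∈ sharpCone M ξ₀, (1 - p) ζ ∈ sharpCone M ξ₀)
    {a : H →L[ℂ] H} (ha : a ∈ M) (hpos : a.IsPositive) {k : ℝ} (hk : 0 < k)
    (hka : ((k : ℂ) • (1 : H →L[ℂ] H) - a).IsPositive) :
    ∃ c ∈ M, c ξ₀ = p (a ξ₀) := by
  have h₁ : (k : ℂ) • (1 : H →L[ℂ] H) ∈ M := M.smul_mem _ (one_mem M)
  refine hsep.exists_apply_eq hk (hp _ (apply_mem_sharpCone ha hpos)) ?_
  have h₂ := hp _ (apply_mem_sharpCone (ξ₀ := ξ₀) (sub_mem h₁ ha) hka)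
  have h₃ := hp' _ (apply_mem_sharpCone (ξ₀ := ξ₀) h₁
    (ContinuousLinearMap.isPositive_one.smul_of_nonneg (by simpa using hk.le)))
  convert add_mem_sharpCone h₂ h₃ using 1
  simp

/-- If the idempotent `p` and `1 - p` preserve `P♯`, then `p ξ₀ = b ξ₀` for a positive
idempotent `b ∈ M`. -/
theorem IsSeparatingVector.exists_projection_apply_eq (hsep : IsSeparatingVector M ξ₀)
    {p : H →L[ℂ] H} (hp_idem : p * p = p)
    (hp : ∀ ζ ∈ sharpCone M ξ₀, p ζ ∈ sharpCone M ξ₀)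
    (hp' : ∀ ζ ∈ sharpCone M ξ₀, (1 - p) ζ ∈ sharpCone M ξ₀) :
    ∃ b ∈ M, b.IsPositive ∧ b * b = b ∧ b ξ₀ = p ξ₀ := by
  have hξ : ξ₀ ∈ sharpCone M ξ₀ :=
    apply_mem_sharpCone (one_mem M) ContinuousLinearMap.isPositive_one
  have hpp : p (p ξ₀) = p ξ₀ := congr($hp_idem ξ₀)
  obtain ⟨b, hb, hbξ⟩ := hsep.exists_apply_eq_map_apply hp hp' (one_mem M)
    ContinuousLinearMap.isPositive_one one_pos (by simp)
  rw [one_apply_eq_self] at hbξ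
  have hb1 : 1 - b ∈ M := sub_mem (one_mem M) hb
  have hbpos : b.IsPositive :=
    hsep.isPositive_of_apply_mem_sharpCone hb (hbξ ▸ hp _ hξ)
  have hb1pos : (1 - b).IsPositive := by
    refine hsep.isPositive_of_apply_mem_sharpCone hb1 ?_
    simpa [hbξ] using hp' _ hξ
  set x := b * (1 - b) with hx
  have hxM : x ∈ M := mul_mem hb hb1
  have hxpos : x.IsPositive := hbpos.mul_one_sub hb1pos
  have hsub : (1 - b - x).IsPositive := by
    convert hb1pos.isSelfAdjoint.isPositive_mul_self using 1
    rw [hx]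
    noncomm_ring
  have hsub' : (b - x).IsPositive := by
    convert hbpos.isSelfAdjoint.isPositive_mul_self using 1
    rw [hx]
    noncomm_ring
  have hx1 : (((1 : ℝ) : ℂ) • (1 : H →L[ℂ] H) - x).IsPositive := by
    convert hsub.add hbpos using 1
    rw [Complex.ofReal_one, one_smul]
    abel
  obtain ⟨c, hc, hcξ⟩ := hsep.exists_apply_eq_map_apply hp hp' hxM hxpos one_pos hx1
  have hc0 : c = 0 := by
    refine ContinuousLinearMap.IsPositive.eq_zero_of_neg
      (hsep.isPositive_of_apply_mem_sharpCone hc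
        (hcξ ▸ hp _ (apply_mem_sharpCone hxM hxpos)))
      (hsep.isPositive_of_apply_mem_sharpCone (neg_mem hc) ?_)
    have := hp _ (apply_mem_sharpCone (ξ₀ := ξ₀) (sub_mem hb1 hxM) hsub)
    simpa [hbξ, hpp, hcξ] using this
  have hpx : p (x ξ₀) = 0 := by rw [← hcξ, hc0, zero_apply]
  have hx0 : x = 0 := by
    refine hxpos.eq_zero_of_neg (hsep.isPositive_of_apply_mem_sharpCone (neg_mem hxM) ?_)
    have := hp' _ (apply_mem_sharpCone (ξ₀ := ξ₀) (sub_mem hb hxM) hsub')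
    simpa [hbξ, hpp, hpx] using this
  refine ⟨b, hb, hbpos, ?_, hbξ⟩
  rw [hx, mul_sub, mul_one, sub_eq_zero] at hx0
  exact hx0.symm

/-- If `p` and `1 - p` preserve `P♯` and `p ξ₀ = b ξ₀` for a positive idempotent `b ∈ M`, then
`b` commutes with every positive `a ∈ M` and `p` acts on `a ξ₀` as `b`. -/
theorem IsSeparatingVector.commute_and_map_apply (hsep : IsSeparatingVector M ξ₀)
    {p b : H →L[ℂ] H}
    (hp : ∀ ζ ∈ sharpCone M ξ₀, p ζ ∈ sharpCone M ξ₀)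
    (hp' : ∀ ζ ∈ sharpCone M ξ₀, (1 - p) ζ ∈ sharpCone M ξ₀)
    (hb : b ∈ M) (hbpos : b.IsPositive) (hbb : b * b = b) (hbξ : b ξ₀ = p ξ₀)
    {a : H →L[ℂ] H} (ha : a ∈ M) (hpos : a.IsPositive) :
    b * a = a * b ∧ p (a ξ₀) = b (a ξ₀) := by
  set k : ℝ := ‖a‖ + 1
  have hk : 0 < k := by positivity
  have hka : ((k : ℂ) • (1 : H →L[ℂ] H) - a).IsPositive := by
    convert hpos.isSelfAdjoint.isPositive_norm_smul_one_sub.add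
      ContinuousLinearMap.isPositive_one using 1
    simp only [k, Complex.ofReal_add, Complex.ofReal_one, add_smul, one_smul]
    abel
  have hkM : (k : ℂ) • (1 : H →L[ℂ] H) ∈ M := M.smul_mem _ (one_mem M)
  obtain ⟨c, hc, hcξ⟩ := hsep.exists_apply_eq_map_apply hp hp' ha hpos hk hka
  have hcpos : c.IsPositive := hsep.isPositive_of_apply_mem_sharpCone hc
    (hcξ ▸ hp _ (apply_mem_sharpCone ha hpos))
  have hacpos : (a - c).IsPositive := by
    refine hsep.isPositive_of_apply_mem_sharpCone (sub_mem ha hc) ?_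
    simpa [hcξ] using hp' _ (apply_mem_sharpCone (ξ₀ := ξ₀) ha hpos)
  have hcle : ((k : ℂ) • b - c).IsPositive := by
    refine hsep.isPositive_of_apply_mem_sharpCone (sub_mem (M.smul_mem _ hb) hc) ?_
    simpa [hcξ, hbξ] using hp _ (apply_mem_sharpCone (ξ₀ := ξ₀) (sub_mem hkM ha) hka)
  have hacle : ((k : ℂ) • (1 - b) - (a - c)).IsPositive := by
    refine hsep.isPositive_of_apply_mem_sharpCone
      (sub_mem (M.smul_mem _ (sub_mem (one_mem M) hb)) (sub_mem ha hc)) ?_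
    convert hp' _ (apply_mem_sharpCone (ξ₀ := ξ₀) (sub_mem hkM ha) hka) using 1
    simp [hcξ, hbξ, smul_sub]
    abel
  have hcb : c * (1 - b) = 0 :=
    hcpos.mul_eq_zero_of_le hcle
      (by rw [smul_mul_assoc, mul_sub, hbb, mul_one, sub_self, smul_zero])
  have hacb : (a - c) * b = 0 :=
    hacpos.mul_eq_zero_of_le hacle
      (by rw [smul_mul_assoc, sub_mul, hbb, one_mul, sub_self, smul_zero])
  have hab : a * b = c := by
    rw [sub_mul, sub_eq_zero] at hacb
    rw [mul_sub, mul_one, sub_eq_zero] at hcb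
    rw [hacb, ← hcb]
  have hba : b * a = c := by
    have := congr(star $hab)
    rwa [star_mul, hbpos.isSelfAdjoint.star_eq, hpos.isSelfAdjoint.star_eq,
      hcpos.isSelfAdjoint.star_eq] at this
  refine ⟨hba.trans hab.symm, ?_⟩
  rw [← hcξ, ← hba]
  rfl

/-- A central projection of `M` preserves `P♯`. -/
theorem map_mem_sharpCone_of_central {p : H →L[ℂ] H} (hp_sa : IsSelfAdjoint p)
    (hp_idem : p * p = p) (hp : p ∈ M) (hcomm : ∀ x ∈ M, p * x = x * p) {ζ : H}
    (hζ : ζ ∈ sharpCone M ξ₀) : p ζ ∈ sharpCone M ξ₀ := by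
  refine map_mem_closure (f := p) p.continuous hζ ?_
  rintro _ ⟨a, ha, hpos, rfl⟩
  refine ⟨p * a, mul_mem hp ha, ?_, rfl⟩
  have h := hpos.conj_adjoint p
  rw [hp_sa.adjoint_eq] at h
  convert h using 1
  change p * a = p * (a * p)
  rw [← hcomm a ha, ← mul_assoc, hp_idem]

end sharpCone

/-- An orthogonal projection `p` on `H` is a central projection of `M` if and
only if `p` and `1 - p` both preserve `P♯`. -/
theorem stmt12 (M : VonNeumannAlgebra H) (ξ₀ : H)
    (hcyc : IsCyclicVector M ξ₀) (hsep : IsSeparatingVector M ξ₀)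
    (p : H →L[ℂ] H) (hp_sa : IsSelfAdjoint p) (hp_idem : p * p = p) :
    (p ∈ M ∧ ∀ x ∈ M, p * x = x * p) ↔
      ((∀ ζ ∈ sharpCone M ξ₀, p ζ ∈ sharpCone M ξ₀) ∧
       (∀ ζ ∈ sharpCone M ξ₀, (1 - p) ζ ∈ sharpCone M ξ₀)) := by
  constructor
  · rintro ⟨hpM, hcomm⟩
    refine ⟨fun ζ => map_mem_sharpCone_of_central hp_sa hp_idem hpM hcomm,
      fun ζ => map_mem_sharpCone_of_central ((IsSelfAdjoint.one _).sub hp_sa) ?_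
        (sub_mem (one_mem M) hpM) fun x hx => ?_⟩
    · simp [sub_mul, mul_sub, hp_idem]
    · rw [sub_mul, mul_sub, hcomm x hx, one_mul, mul_one]
  · rintro ⟨hp, hp'⟩
    obtain ⟨b, hb, hbpos, hbb, hbξ⟩ := hsep.exists_projection_apply_eq hp_idem hp hp'
    have key := fun a ha hpos => hsep.commute_and_map_apply (a := a) hp hp' hb hbpos hbb hbξ ha hpos
    have hcomm : ∀ a ∈ M, b * a = a * b := fun a ha =>
      VonNeumannAlgebra.mem_of_isPositive_mem
        ((LinearMap.mulLeft ℂ b).eqLocus (LinearMap.mulRight ℂ b))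
        (fun a ha hpos => (key a ha hpos).1) ha
    have happly : ∀ a ∈ M, p (a ξ₀) = b (a ξ₀) := fun a ha =>
      VonNeumannAlgebra.mem_of_isPositive_mem
        ((p.toLinearMap ∘ₗ (ContinuousLinearMap.apply ℂ H ξ₀).toLinearMap).eqLocus
          (b.toLinearMap ∘ₗ (ContinuousLinearMap.apply ℂ H ξ₀).toLinearMap))
        (fun a ha hpos => (key a ha hpos).2) ha
    have hpb : p = b := by
      ext v
      exact hcyc.denseRange_evalAt.induction_on v (isClosed_eq (by fun_prop) (by fun_prop))
        fun x => happly x x.2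
    exact hpb ▸ ⟨hb, hcomm⟩
end

section
/- Let H be a complex Hilbert space, M a von Neumann algebra acting on H, and ξ₀ a cyclic and separating vector for M. If ζ ∈ P♯ and ξ₀ − ζ ∈ P♯, then there exists a ∈ M with 0 ≤ a ≤ 1 such that ζ = a ξ₀. -/
open scoped InnerProductSpace
open Filter

variable {H : Type*} [NormedAddCommGroup H] [InnerProductSpace ℂ H] [CompleteSpace H]

namespace ContinuousLinearMap

/-- The Cauchy–Schwarz inequality for the form `(u, v) ↦ ⟪u, T v⟫` of a positive operator. -/
theorem IsPositive.norm_inner_sq_le {E : Type*} [NormedAddCommGroup E] [InnerProductSpace ℂ E]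
    {T : E →L[ℂ] E} (hT : T.IsPositive) (u v : E) :
    ‖⟪u, T v⟫_ℂ‖ ^ 2 ≤ (⟪u, T u⟫_ℂ).re * (⟪v, T v⟫_ℂ).re := by
  let core : PreInnerProductSpace.Core ℂ E :=
    { inner := fun u v => ⟪u, T v⟫_ℂ
      conj_inner_symm := fun x y => by
        rw [inner_conj_symm, hT.inner_left_eq_inner_right]
      re_inner_nonneg := fun x => hT.re_inner_nonneg_right x
      add_left := fun x y z => inner_add_left _ _ _
      smul_left := fun x y r => inner_smul_left _ _ _ }
  have key : ‖⟪u, T v⟫_ℂ‖ * ‖⟪v, T u⟫_ℂ‖ ≤ (⟪u, T u⟫_ℂ).re * (⟪v, T v⟫_ℂ).re :=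
    @InnerProductSpace.Core.inner_mul_inner_self_le ℂ E _ _ _ core u v
  rwa [← hT.inner_left_eq_inner_right v u, norm_inner_symm (T v) u, ← sq] at key

end ContinuousLinearMap

namespace VonNeumannAlgebra

/-- Evaluation of the operators in a von Neumann algebra at a vector. -/
def evalAt_s13 (M : VonNeumannAlgebra H) (v : H) : M.toStarSubalgebra →ₗ[ℂ] H where
  toFun x := (x : H →L[ℂ] H) v
  map_add' _ _ := rfl
  map_smul' _ _ := rfl

@[simp]
theorem evalAt_apply (M : VonNeumannAlgebra H) (v : H) (x : M.toStarSubalgebra) :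
    M.evalAt_s13 v x = (x : H →L[ℂ] H) v :=
  rfl

/-- A separating vector for a von Neumann algebra is cyclic for the commutant. -/
theorem denseRange_evalAt_commutant {M : VonNeumannAlgebra H} {ξ : H}
    (hξ : IsSeparatingVector M ξ) : DenseRange (M.commutant.evalAt_s13 ξ) := by
  set K : Submodule ℂ H := (M.commutant.evalAt_s13 ξ).range.topologicalClosure
  have : CompleteSpace K := (Submodule.isClosed_topologicalClosure _).completeSpace_coe
  have hinv : ∀ y ∈ M.commutant, ∀ v ∈ K, y v ∈ K := by
    intro y hy v hv
    refine map_mem_closure y.continuous hv ?_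
    rintro _ ⟨x, rfl⟩
    exact ⟨⟨y, hy⟩ * x, rfl⟩
  have hp : K.starProjection ∈ M := by
    refine (IsStarProjection.mem_iff isStarProjection_starProjection M).2 fun y hy => ?_
    rw [Submodule.range_starProjection]
    exact hinv y hy
  have hξK : ξ ∈ K := subset_closure ⟨1, rfl⟩
  have hp1 : K.starProjection - 1 = 0 := by
    refine hξ _ (sub_mem hp (one_mem M)) ?_
    simp [Submodule.starProjection_eq_self_iff.2 hξK]
  intro v
  have hv : v ∈ K := by
    rw [← Submodule.starProjection_eq_self_iff, sub_eq_zero.1 hp1]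
    rfl
  exact hv

end VonNeumannAlgebra

section

variable {M : VonNeumannAlgebra H} {ξ ζ : H}

/-- A closed property of vectors holds on `sharpCone M ξ` once it holds for `a ξ`, `a ∈ M`
positive. -/
theorem sharpCone_induction {p : H → Prop} (hp : IsClosed {ζ | p ζ})
    (h : ∀ a ∈ M, a.IsPositive → p (a ξ)) (hζ : ζ ∈ sharpCone M ξ) : p ζ := by
  refine closure_minimal ?_ hp hζ
  rintro _ ⟨a, ha, hpos, rfl⟩
  exact h a ha hpos

theorem apply_comm_of_mem_commutant {a x : H →L[ℂ] H} (ha : a ∈ M) (hx : x ∈ M.commutant)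
    (v : H) : x (a v) = a (x v) :=
  (DFunLike.congr_fun (VonNeumannAlgebra.mem_commutant_iff.1 hx a ha) v).symm

open ComplexOrder in
theorem inner_nonneg_of_mem_sharpCone (hζ : ζ ∈ sharpCone M ξ) {x : H →L[ℂ] H}
    (hx : x ∈ M.commutant) : 0 ≤ ⟪x ξ, x ζ⟫_ℂ := by
  refine sharpCone_induction (p := fun ζ => 0 ≤ ⟪x ξ, x ζ⟫_ℂ)
    (isClosed_le (by fun_prop) (by fun_prop)) (fun a ha hpos => ?_) hζ
  rw [apply_comm_of_mem_commutant ha hx]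
  exact hpos.inner_nonneg_right _

theorem norm_inner_sq_le_of_mem_sharpCone (hζ : ζ ∈ sharpCone M ξ) {x y : H →L[ℂ] H}
    (hx : x ∈ M.commutant) (hy : y ∈ M.commutant) :
    ‖⟪y ξ, x ζ⟫_ℂ‖ ^ 2 ≤ (⟪y ξ, y ζ⟫_ℂ).re * (⟪x ξ, x ζ⟫_ℂ).re := by
  refine sharpCone_induction
    (p := fun ζ => ‖⟪y ξ, x ζ⟫_ℂ‖ ^ 2 ≤ (⟪y ξ, y ζ⟫_ℂ).re * (⟪x ξ, x ζ⟫_ℂ).re)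
    (isClosed_le (by fun_prop) (by fun_prop)) (fun a ha hpos => ?_) hζ
  simp only [apply_comm_of_mem_commutant ha hx, apply_comm_of_mem_commutant ha hy]
  exact hpos.norm_inner_sq_le _ _

theorem re_inner_le_norm_sq_of_sub_mem_sharpCone (hζ' : ξ - ζ ∈ sharpCone M ξ)
    {x : H →L[ℂ] H} (hx : x ∈ M.commutant) : (⟪x ξ, x ζ⟫_ℂ).re ≤ ‖x ξ‖ ^ 2 := by
  have h := (Complex.nonneg_iff.1 (inner_nonneg_of_mem_sharpCone hζ' hx)).1
  rw [map_sub, inner_sub_right, Complex.sub_re] at h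
  have h2 : (⟪x ξ, x ξ⟫_ℂ).re = ‖x ξ‖ ^ 2 := inner_self_eq_norm_sq (𝕜 := ℂ) (x ξ)
  linarith

/-- If `0 ≤ ζ ≤ ξ` with respect to `sharpCone M ξ`, then `x ξ ↦ x ζ` is contractive on the
orbit of `ξ` under the commutant. -/
theorem norm_apply_le_of_mem_sharpCone (hsep : IsSeparatingVector M ξ)
    (hζ : ζ ∈ sharpCone M ξ) (hζ' : ξ - ζ ∈ sharpCone M ξ) {x : H →L[ℂ] H}
    (hx : x ∈ M.commutant) : ‖x ζ‖ ≤ ‖x ξ‖ := by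
  have hbound : ∀ v : H, ‖⟪v, x ζ⟫_ℂ‖ ≤ ‖v‖ * ‖x ξ‖ := by
    refine fun v => (VonNeumannAlgebra.denseRange_evalAt_commutant hsep).induction_on v
      (isClosed_le (by fun_prop) (by fun_prop)) ?_
    rintro ⟨y, hy⟩
    refine le_of_sq_le_sq ?_ (by positivity)
    calc ‖⟪y ξ, x ζ⟫_ℂ‖ ^ 2 ≤ (⟪y ξ, y ζ⟫_ℂ).re * (⟪x ξ, x ζ⟫_ℂ).re :=
          norm_inner_sq_le_of_mem_sharpCone hζ hx hy
      _ ≤ ‖y ξ‖ ^ 2 * ‖x ξ‖ ^ 2 :=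
          mul_le_mul (re_inner_le_norm_sq_of_sub_mem_sharpCone hζ' hy)
            (re_inner_le_norm_sq_of_sub_mem_sharpCone hζ' hx)
            (Complex.nonneg_iff.1 (inner_nonneg_of_mem_sharpCone hζ hx)).1 (by positivity)
      _ = (‖y ξ‖ * ‖x ξ‖) ^ 2 := (mul_pow _ _ _).symm
  have h := hbound (x ζ)
  rw [inner_self_eq_norm_sq_to_K, norm_pow, RCLike.norm_ofReal, sq_abs] at h
  nlinarith [norm_nonneg (x ζ), norm_nonneg (x ξ)]

open ComplexOrder in
/-- An operator with `a (x ξ) = x ζ` for all `x` in the commutant is positive if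
`ζ ∈ sharpCone M ξ`. -/
theorem isPositive_of_apply_commutant_eq (hsep : IsSeparatingVector M ξ)
    (hζ : ζ ∈ sharpCone M ξ) {a : H →L[ℂ] H} (ha : ∀ x ∈ M.commutant, a (x ξ) = x ζ) :
    a.IsPositive := by
  have hnonneg : ∀ v : H, 0 ≤ ⟪a v, v⟫_ℂ := by
    refine fun v => (VonNeumannAlgebra.denseRange_evalAt_commutant hsep).induction_on v
      (isClosed_le (by fun_prop) (by fun_prop)) ?_
    rintro ⟨x, hx⟩
    have h := inner_nonneg_of_mem_sharpCone hζ hx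
    rw [VonNeumannAlgebra.evalAt_apply, ha x hx, ← inner_conj_symm]
    exact star_nonneg_iff.2 h
  rw [ContinuousLinearMap.isPositive_iff_complex]
  intro v
  obtain ⟨h1, h2⟩ := Complex.nonneg_iff.1 (hnonneg v)
  exact ⟨Complex.ext (by simp) (by simpa using h2), h1⟩

end

/-- If `ζ ∈ P♯` and `ξ₀ - ζ ∈ P♯`, then `ζ = a ξ₀` for some `a ∈ M` with
`0 ≤ a ≤ 1`. -/
theorem stmt13 (M : VonNeumannAlgebra H) (ξ₀ : H)
    (hcyc : IsCyclicVector M ξ₀) (hsep : IsSeparatingVector M ξ₀)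
    (ζ : H) (hζ : ζ ∈ sharpCone M ξ₀) (hζ' : ξ₀ - ζ ∈ sharpCone M ξ₀) :
    ∃ a : H →L[ℂ] H, a ∈ M ∧ a.IsPositive ∧ (1 - a).IsPositive ∧ ζ = a ξ₀ := by
  have hdense := VonNeumannAlgebra.denseRange_evalAt_commutant hsep
  obtain ⟨a, ha⟩ : ∃ a : H →L[ℂ] H, ∀ x ∈ M.commutant, a (x ξ₀) = x ζ :=
    ⟨(M.commutant.evalAt_s13 ζ).extendOfNorm (M.commutant.evalAt_s13 ξ₀), fun x hx =>
      LinearMap.extendOfNorm_eq hdense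
        ⟨1, fun y => by
          simpa using norm_apply_le_of_mem_sharpCone hsep hζ hζ' y.2⟩ ⟨x, hx⟩⟩
  refine ⟨a, ?_, isPositive_of_apply_commutant_eq hsep hζ ha,
    isPositive_of_apply_commutant_eq hsep hζ' fun x hx => by simp [ha x hx],
    (ha 1 (one_mem _)).symm⟩
  rw [← M.commutant_commutant, VonNeumannAlgebra.mem_commutant_iff]
  intro y hy
  ext v
  refine hdense.induction_on v (isClosed_eq (by fun_prop) (by fun_prop)) ?_
  rintro ⟨x, hx⟩
  change y (a (x ξ₀)) = a ((y * x) ξ₀)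
  rw [ha x hx, ha _ (mul_mem hy hx)]
  rfl
end

section
/- Let H be a complex Hilbert space, M a von Neumann algebra acting on H, and ξ₀ a cyclic and separating vector for M. For every positive a ∈ M, the sharp norm of a ξ₀ equals the operator norm of a: inf { c ∈ ℝ : c > 0 and ξ₀ − c⁻¹ • (a ξ₀) ∈ P♯ } = ‖a‖. -/
open scoped InnerProductSpace
open Filter

variable {H : Type*} [NormedAddCommGroup H] [InnerProductSpace ℂ H] [CompleteSpace H]

/-- A separating vector for `M` is cyclic for the commutant of `M`. -/
theorem IsSeparatingVector.dense_commutant {M : VonNeumannAlgebra H} {ξ₀ : H}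
    (hsep : IsSeparatingVector M ξ₀) :
    Dense {ζ : H | ∃ y ∈ M.commutant, y ξ₀ = ζ} := by
  let S : Submodule ℂ H :=
    (Subalgebra.toSubmodule M.commutant.toStarSubalgebra.toSubalgebra).map
      (ContinuousLinearMap.apply ℂ H ξ₀).toLinearMap
  have hS : (S : Set H) = {ζ : H | ∃ y ∈ M.commutant, y ξ₀ = ζ} := rfl
  let K := S.topologicalClosure
  have hK : IsClosed (K : Set H) := S.isClosed_topologicalClosure
  have : CompleteSpace K := hK.completeSpace_coe
  have hinv : ∀ y ∈ M.commutant, ∀ ζ ∈ K, y ζ ∈ K := by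
    intro y hy ζ hζ
    refine map_mem_closure y.continuous hζ ?_
    rintro _ ⟨z, hz, rfl⟩
    exact ⟨y * z, mul_mem (S := VonNeumannAlgebra H) (s := M.commutant) hy hz, rfl⟩
  have hpM : K.starProjection ∈ M := by
    rw [VonNeumannAlgebra.IsStarProjection.mem_iff isStarProjection_starProjection]
    intro y hy
    rw [Submodule.range_starProjection, Module.End.mem_invtSubmodule]
    exact hinv y hy
  have hξ : ξ₀ ∈ K := S.le_topologicalClosure ⟨1, one_mem M.commutant, rfl⟩
  have hp : 1 - K.starProjection = 0 := by
    refine hsep _ (sub_mem (one_mem M) hpM) ?_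
    simp [Submodule.starProjection_eq_self_iff.mpr hξ]
  rw [← hS]
  intro ζ
  change ζ ∈ K
  rw [← Submodule.starProjection_eq_self_iff]
  exact (congrArg (fun T : H →L[ℂ] H => T ζ) (sub_eq_zero.mp hp)).symm

/-- Vectors of `P♯` pair nonnegatively with `y* y ξ₀` for `y` in the commutant. -/
theorem re_inner_nonneg_of_mem_sharpCone {M : VonNeumannAlgebra H} {ξ₀ ζ : H}
    (hζ : ζ ∈ sharpCone M ξ₀) {y : H →L[ℂ] H} (hy : y ∈ M.commutant) :
    0 ≤ (⟪y ζ, y ξ₀⟫_ℂ).re := by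
  have hclosed : IsClosed {ζ : H | 0 ≤ (⟪y ζ, y ξ₀⟫_ℂ).re} :=
    isClosed_le continuous_const (by fun_prop)
  refine closure_minimal ?_ hclosed hζ
  rintro _ ⟨b, hbM, hb, rfl⟩
  have hcomm : y (b ξ₀) = b (y ξ₀) :=
    congrArg (fun T : H →L[ℂ] H => T ξ₀) (VonNeumannAlgebra.mem_commutant_iff.mp hy b hbM).symm
  change 0 ≤ (⟪y (b ξ₀), y ξ₀⟫_ℂ).re
  rw [hcomm]
  exact hb.re_inner_nonneg_left _

/-- A self-adjoint `b ∈ M` with `b ξ₀ ∈ P♯` is positive when `ξ₀` is separating. -/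
theorem IsSeparatingVector.isPositive_of_apply_mem_sharpCone_s18 {M : VonNeumannAlgebra H} {ξ₀ : H}
    (hsep : IsSeparatingVector M ξ₀) {b : H →L[ℂ] H} (hbM : b ∈ M) (hb : IsSelfAdjoint b)
    (hbξ : b ξ₀ ∈ sharpCone M ξ₀) : b.IsPositive := by
  rw [ContinuousLinearMap.isPositive_def']
  refine ⟨hb, fun ζ => ?_⟩
  have hclosed : IsClosed {ζ : H | 0 ≤ b.reApplyInnerSelf ζ} :=
    isClosed_le continuous_const b.reApplyInnerSelf_continuous
  refine closure_minimal ?_ hclosed (hsep.dense_commutant ζ)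
  rintro _ ⟨y, hy, rfl⟩
  have hcomm : y (b ξ₀) = b (y ξ₀) :=
    congrArg (fun T : H →L[ℂ] H => T ξ₀) (VonNeumannAlgebra.mem_commutant_iff.mp hy b hbM).symm
  have h := re_inner_nonneg_of_mem_sharpCone hbξ hy
  rwa [hcomm] at h

/-- For positive `a` and `c > 0`, the operator `1 - c⁻¹ a` is positive exactly when `‖a‖ ≤ c`. -/
theorem ContinuousLinearMap.IsPositive.isPositive_one_sub_inv_smul_iff {a : H →L[ℂ] H}
    (ha : a.IsPositive) {c : ℝ} (hc : 0 < c) :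
    (1 - c⁻¹ • a).IsPositive ↔ ‖a‖ ≤ c := by
  have ha0 : 0 ≤ a := (ContinuousLinearMap.nonneg_iff_isPositive a).mpr ha
  have hca : 0 ≤ c⁻¹ • a := smul_nonneg (inv_nonneg.mpr hc.le) ha0
  rw [← ContinuousLinearMap.nonneg_iff_isPositive, sub_nonneg,
    ← CStarAlgebra.norm_le_one_iff_of_nonneg _ hca, norm_smul, Real.norm_eq_abs,
    abs_of_pos (inv_pos.mpr hc), inv_mul_le_one₀ hc]

/-- The inequality `c⁻¹ a ξ₀ ≤ ξ₀` for the order of `P♯` holds exactly when `‖a‖ ≤ c`. -/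
theorem IsSeparatingVector.sub_inv_smul_mem_sharpCone_iff {M : VonNeumannAlgebra H} {ξ₀ : H}
    (hsep : IsSeparatingVector M ξ₀) {a : H →L[ℂ] H} (haM : a ∈ M) (ha : a.IsPositive)
    {c : ℝ} (hc : 0 < c) :
    ξ₀ - c⁻¹ • a ξ₀ ∈ sharpCone M ξ₀ ↔ ‖a‖ ≤ c := by
  have hbM : 1 - c⁻¹ • a ∈ M := by
    refine sub_mem (one_mem M) ?_
    have h := M.toStarSubalgebra.smul_mem haM ((c⁻¹ : ℝ) : ℂ)
    rwa [Complex.coe_smul] at h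
  have hca : 0 ≤ c⁻¹ • a :=
    smul_nonneg (inv_nonneg.mpr hc.le) ((ContinuousLinearMap.nonneg_iff_isPositive a).mpr ha)
  have hbsa : IsSelfAdjoint (1 - c⁻¹ • a) := by
    refine IsSelfAdjoint.sub ?_ (IsSelfAdjoint.of_nonneg hca)
    exact IsSelfAdjoint.one _
  have happly : ξ₀ - c⁻¹ • a ξ₀ = (1 - c⁻¹ • a) ξ₀ := by simp
  rw [happly, ← ha.isPositive_one_sub_inv_smul_iff hc]
  exact ⟨hsep.isPositive_of_apply_mem_sharpCone_s18 hbM hbsa,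
    fun h => subset_closure ⟨_, hbM, h, rfl⟩⟩

/-- For positive `a ∈ M`, the sharp norm of `a ξ₀` equals `‖a‖`:
`inf {c > 0 : ξ₀ - c⁻¹ • (a ξ₀) ∈ P♯} = ‖a‖`. -/
theorem stmt18 (M : VonNeumannAlgebra H) (ξ₀ : H)
    (hcyc : IsCyclicVector M ξ₀) (hsep : IsSeparatingVector M ξ₀)
    (a : H →L[ℂ] H) (haM : a ∈ M) (ha_pos : a.IsPositive) :
    sInf {c : ℝ | 0 < c ∧ ξ₀ - c⁻¹ • (a ξ₀) ∈ sharpCone M ξ₀} = ‖a‖ := by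
  have hset : {c : ℝ | 0 < c ∧ ξ₀ - c⁻¹ • (a ξ₀) ∈ sharpCone M ξ₀} =
      {c : ℝ | 0 < c ∧ ‖a‖ ≤ c} := by
    ext c
    exact and_congr_right fun hc => hsep.sub_inv_smul_mem_sharpCone_iff haM ha_pos hc
  rw [hset]
  refine csInf_eq_of_forall_ge_of_forall_gt_exists_lt
    ⟨‖a‖ + 1, by positivity, by linarith⟩ (fun c hc => hc.2) fun w hw => ?_
  obtain ⟨c, hac, hcw⟩ := exists_between hw
  exact ⟨c, ⟨(norm_nonneg a).trans_lt hac, hac.le⟩, hcw⟩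
end
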